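/- Let M_G and M_H be n×m real matrices with all entries in {0,1} such that M_G ≡ M_H, and assume that every row and every column of M_G is nonzero and every row and every column of M_H is nonzero (no exposed vertices and no empty hyperedges). For such a matrix M define: the fractional packing number p_f(M) as the supremum of { t : ℝ | ∃ y : Fin n → ℝ, (∀ i, 0 ≤ y i) ∧ (∀ e, ∑ over i of M i e * y i ≤ 1) ∧ t = ∑ over i of y i }; the fractional matching number μ_f(M) as the supremum of { t : ℝ | ∃ z : Fin m → ℝ, (∀ e, 0 ≤ z e) ∧ (∀ i, ∑ over e of M i e * z e ≤ 1) ∧ t = ∑ over e of z e }; and the fractional transversal number τ_f(M) as the infimum of { t : ℝ | ∃ x : Fin n → ℝ, (∀ i, 0 ≤ x i) ∧ (∀ e, ∑ over i of M i e * x i ≥ 1) ∧ t = ∑ over i of x i }. Then p_f(M_G) = p_f(M_H), μ_f(M_G) = μ_f(M_H), and τ_f(M_G) = τ_f(M_H). -/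

import Mathlib

/-!
If `S₁ M = N S₂ᵀ` with `S₁`, `S₂` doubly stochastic, then `z ↦ S₂ᵀ z` maps feasible column
weightings of `M` to feasible column weightings of `N` with the same total weight, because
`N (S₂ᵀ z) = S₁ (M z)` averages the constraints (`FracIso.exists_transfer`). Fractional isomorphism
is symmetric and stable under transposition, so the same holds from `N` to `M` and for row
weightings. Hence each of the three linear programs attains the same set of values on both
matrices, and the suprema or infima agree.
-/

open Matrix

/-- A real square matrix is doubly stochastic if all its entries are nonnegative and
each of its rows and each of its columns sums to 1. -/
def DoublyStochastic {n : Type*} [Fintype n] (S : Matrix n n ℝ) : Prop :=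
  (∀ i j, 0 ≤ S i j) ∧ (∀ i, ∑ j, S i j = 1) ∧ (∀ j, ∑ i, S i j = 1)

/-- Fractional isomorphism of hypergraphs given by their incidence matrices. -/
def FracIso {n m : Type*} [Fintype n] [Fintype m] (M N : Matrix n m ℝ) : Prop :=
  ∃ (S₁ : Matrix n n ℝ) (S₂ : Matrix m m ℝ),
    DoublyStochastic S₁ ∧ DoublyStochastic S₂ ∧
    S₁ * M = N * S₂ᵀ ∧ M * S₂ = S₁ᵀ * N

/-- The fractional packing number of a hypergraph given by its incidence matrix. -/
noncomputable def fracPackingNumber {n m : ℕ} (M : Matrix (Fin n) (Fin m) ℝ) : ℝ :=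
  sSup { t : ℝ | ∃ y : Fin n → ℝ, (∀ i, 0 ≤ y i) ∧ (∀ e, ∑ i, M i e * y i ≤ 1) ∧
    t = ∑ i, y i }

/-- The fractional matching number of a hypergraph given by its incidence matrix. -/
noncomputable def fracMatchingNumber {n m : ℕ} (M : Matrix (Fin n) (Fin m) ℝ) : ℝ :=
  sSup { t : ℝ | ∃ z : Fin m → ℝ, (∀ e, 0 ≤ z e) ∧ (∀ i, ∑ e, M i e * z e ≤ 1) ∧
    t = ∑ e, z e }

/-- The fractional transversal number of a hypergraph given by its incidence matrix. -/
noncomputable def fracTransversalNumber {n m : ℕ} (M : Matrix (Fin n) (Fin m) ℝ) : ℝ :=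
  sInf { t : ℝ | ∃ x : Fin n → ℝ, (∀ i, 0 ≤ x i) ∧ (∀ e, 1 ≤ ∑ i, M i e * x i) ∧
    t = ∑ i, x i }

lemma DoublyStochastic.sum_mulVec {k : Type*} [Fintype k] {A : Matrix k k ℝ}
    (hA : DoublyStochastic A) (z : k → ℝ) : ∑ i, (A *ᵥ z) i = ∑ i, z i := by
  simp only [mulVec, dotProduct]
  rw [Finset.sum_comm]
  simp [← Finset.sum_mul, hA.2.2]

lemma DoublyStochastic.mulVec_mono {k : Type*} [Fintype k] {A : Matrix k k ℝ}
    (hA : DoublyStochastic A) {v w : k → ℝ} (h : ∀ i, v i ≤ w i) (i : k) :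
    (A *ᵥ v) i ≤ (A *ᵥ w) i :=
  Finset.sum_le_sum fun j _ => mul_le_mul_of_nonneg_left (h j) (hA.1 i j)

lemma DoublyStochastic.mulVec_one {k : Type*} [Fintype k] {A : Matrix k k ℝ}
    (hA : DoublyStochastic A) (i : k) : (A *ᵥ fun _ => (1 : ℝ)) i = 1 := by
  simp [mulVec, dotProduct, hA.2.1]

lemma DoublyStochastic.transpose {k : Type*} [Fintype k] {A : Matrix k k ℝ}
    (hA : DoublyStochastic A) : DoublyStochastic Aᵀ :=
  ⟨fun i j => hA.1 j i, hA.2.2, hA.2.1⟩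

lemma FracIso.symm {k l : Type*} [Fintype k] [Fintype l] {M N : Matrix k l ℝ}
    (h : FracIso M N) : FracIso N M := by
  obtain ⟨S₁, S₂, h₁, h₂, e₁, e₂⟩ := h
  exact ⟨S₁ᵀ, S₂ᵀ, h₁.transpose, h₂.transpose, by simpa using e₂.symm, by simpa using e₁.symm⟩

lemma FracIso.transpose {k l : Type*} [Fintype k] [Fintype l] {M N : Matrix k l ℝ}
    (h : FracIso M N) : FracIso Mᵀ Nᵀ := by
  obtain ⟨S₁, S₂, h₁, h₂, e₁, e₂⟩ := h
  refine ⟨S₂ᵀ, S₁ᵀ, h₂.transpose, h₁.transpose, ?_, ?_⟩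
  · simpa using congrArg Matrix.transpose e₂
  · simpa using congrArg Matrix.transpose e₁

/-- A nonnegative weighting `z` of the columns of `M` is carried to the weighting `S₂ᵀ z` of the
columns of `N`. The total weight is unchanged, and since `N (S₂ᵀ z) = S₁ (M z)` is an average of
the entries of `M z`, bounds by the constant `1` on either side survive. -/
lemma FracIso.exists_transfer {k l : Type*} [Fintype k] [Fintype l] {M N : Matrix k l ℝ}
    (h : FracIso M N) (z : l → ℝ) (hz : ∀ e, 0 ≤ z e) :
    ∃ w : l → ℝ, (∀ e, 0 ≤ w e) ∧ ∑ e, w e = ∑ e, z e ∧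
      ((∀ i, ∑ e, M i e * z e ≤ 1) → ∀ i, ∑ e, N i e * w e ≤ 1) ∧
      ((∀ i, 1 ≤ ∑ e, M i e * z e) → ∀ i, 1 ≤ ∑ e, N i e * w e) := by
  obtain ⟨S₁, S₂, h₁, h₂, e₁, -⟩ := h
  have key : N *ᵥ (S₂ᵀ *ᵥ z) = S₁ *ᵥ (M *ᵥ z) := by
    rw [mulVec_mulVec, mulVec_mulVec, e₁]
  refine ⟨S₂ᵀ *ᵥ z, fun e => ?_, h₂.transpose.sum_mulVec z, fun hM i => ?_, fun hM i => ?_⟩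
  · exact Finset.sum_nonneg fun j _ => mul_nonneg (h₂.1 j e) (hz j)
  · change (N *ᵥ (S₂ᵀ *ᵥ z)) i ≤ 1
    rw [key, ← h₁.mulVec_one i]
    exact h₁.mulVec_mono hM i
  · change 1 ≤ (N *ᵥ (S₂ᵀ *ᵥ z)) i
    rw [key, ← h₁.mulVec_one i]
    exact h₁.mulVec_mono hM i

theorem fracIso_packing_matching_transversal_eq {n m : ℕ}
    (MG MH : Matrix (Fin n) (Fin m) ℝ)
    (hG01 : ∀ i e, MG i e = 0 ∨ MG i e = 1) (hH01 : ∀ i e, MH i e = 0 ∨ MH i e = 1)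
    (h : FracIso MG MH)
    (hGrow : ∀ i, ∃ e, MG i e ≠ 0) (hGcol : ∀ e, ∃ i, MG i e ≠ 0)
    (hHrow : ∀ i, ∃ e, MH i e ≠ 0) (hHcol : ∀ e, ∃ i, MH i e ≠ 0) :
    fracPackingNumber MG = fracPackingNumber MH ∧
    fracMatchingNumber MG = fracMatchingNumber MH ∧
    fracTransversalNumber MG = fracTransversalNumber MH := by
  refine ⟨congrArg sSup (Set.ext fun t => ⟨?_, ?_⟩), congrArg sSup (Set.ext fun t => ⟨?_, ?_⟩),
    congrArg sInf (Set.ext fun t => ⟨?_, ?_⟩)⟩ <;> rintro ⟨z, hz, hM, rfl⟩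
  · obtain ⟨w, hw, hs, hle, -⟩ := h.transpose.exists_transfer z hz
    exact ⟨w, hw, hle hM, hs.symm⟩
  · obtain ⟨w, hw, hs, hle, -⟩ := h.symm.transpose.exists_transfer z hz
    exact ⟨w, hw, hle hM, hs.symm⟩
  · obtain ⟨w, hw, hs, hle, -⟩ := h.exists_transfer z hz
    exact ⟨w, hw, hle hM, hs.symm⟩
  · obtain ⟨w, hw, hs, hle, -⟩ := h.symm.exists_transfer z hz
    exact ⟨w, hw, hle hM, hs.symm⟩
  · obtain ⟨w, hw, hs, -, hge⟩ := h.transpose.exists_transfer z hz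
    exact ⟨w, hw, hge hM, hs.symm⟩
  · obtain ⟨w, hw, hs, -, hge⟩ := h.symm.transpose.exists_transfer z hz
    exact ⟨w, hw, hge hM, hs.symm⟩
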